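/- Let (n_p, n_r, ℓ_p, ℓ_r, S) be a paper assignment instance in which S is blockwise dominant with block identity A ∈ ℝ_{≥0}^{k×k} and block sizes (p_1,…,p_k), (r_1,…,r_k). Assume (i) r_1,…,r_k are not all equal, (ii) p_i·ℓ_p ≤ r_i·ℓ_r for all i ∈ {1,…,k}, and (iii) Q·r_i ≥ ℓ_p for all i ∈ {1,…,k}. Let f be a strictly concave perturbation function with f′(0) < Dom(A)·f′(1). Then for every x ∈ PM(Q,f) and every y ∈ PLRA(Q): Quality(x) ≥ Quality(y), Maxprob(x) ≤ Maxprob(y), AvgMaxp(x) ≤ AvgMaxp(y), L2Norm(x) ≤ L2Norm(y), Entropy(x) ≥ Entropy(y), and Support(x) ≥ Support(y). -/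

import Mathlib

open Finset

noncomputable section

/-- The feasible set `F(Q)` of randomized assignments. -/
def Feasible (np nr lp lr : ℕ) (Q : ℝ) (x : Fin np → Fin nr → ℝ) : Prop :=
  (∀ p, ∑ r, x p r = (lp : ℝ)) ∧ (∀ r, ∑ p, x p r ≤ (lr : ℝ)) ∧
    ∀ p r, 0 ≤ x p r ∧ x p r ≤ Q

/-- `Quality(x) = Σ_{p,r} x_{p,r} S_{p,r}`. -/
def Quality {np nr : ℕ} (S x : Fin np → Fin nr → ℝ) : ℝ :=
  ∑ p, ∑ r, x p r * S p r

/-- `PQuality_f(x) = Σ_{p,r} S_{p,r} f(x_{p,r})`. -/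
def PQuality {np nr : ℕ} (f : ℝ → ℝ) (S x : Fin np → Fin nr → ℝ) : ℝ :=
  ∑ p, ∑ r, S p r * f (x p r)

/-- `PLRA(Q)`: the set of maximizers of `Quality` over `F(Q)`. -/
def PLRA (np nr lp lr : ℕ) (Q : ℝ) (S : Fin np → Fin nr → ℝ) :
    Set (Fin np → Fin nr → ℝ) :=
  {x | Feasible np nr lp lr Q x ∧
    ∀ y, Feasible np nr lp lr Q y → Quality S y ≤ Quality S x}

/-- `PM(Q,f)`: the set of maximizers of `PQuality_f` over `F(Q)`. -/
def PM (np nr lp lr : ℕ) (Q : ℝ) (f : ℝ → ℝ) (S : Fin np → Fin nr → ℝ) :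
    Set (Fin np → Fin nr → ℝ) :=
  {x | Feasible np nr lp lr Q x ∧
    ∀ y, Feasible np nr lp lr Q y → PQuality f S y ≤ PQuality f S x}

/-- `Maxprob(x) = max_{p,r} x_{p,r}`. -/
def Maxprob {np nr : ℕ} (x : Fin np → Fin nr → ℝ) : ℝ := ⨆ p, ⨆ r, x p r

/-- `AvgMaxp(x) = (1/n_p) Σ_p max_r x_{p,r}`. -/
def AvgMaxp {np nr : ℕ} (x : Fin np → Fin nr → ℝ) : ℝ := (∑ p, ⨆ r, x p r) / np

/-- `Support(x) = #{(p,r) : x_{p,r} > 0}`. -/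
def SupportSize {np nr : ℕ} (x : Fin np → Fin nr → ℝ) : ℕ :=
  {pr : Fin np × Fin nr | 0 < x pr.1 pr.2}.ncard

/-- `Entropy(x) = -Σ_{p,r} x_{p,r} ln x_{p,r}` (with `Real.log 0 = 0`). -/
def Entropy {np nr : ℕ} (x : Fin np → Fin nr → ℝ) : ℝ :=
  -∑ p, ∑ r, x p r * Real.log (x p r)

/-- `L2Norm(x) = sqrt(Σ_{p,r} x_{p,r}²)`. -/
def L2Norm {np nr : ℕ} (x : Fin np → Fin nr → ℝ) : ℝ :=
  Real.sqrt (∑ p, ∑ r, (x p r) ^ 2)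

/-- A perturbation function: `f : [0,1] → [0,1]`, `f 0 = 0`, nondecreasing and concave
on `[0,1]` (differentiability is recorded separately via `HasDerivWithinAt`). -/
def IsPerturbation (f : ℝ → ℝ) : Prop :=
  f 0 = 0 ∧ (∀ t ∈ Set.Icc (0 : ℝ) 1, f t ∈ Set.Icc (0 : ℝ) 1) ∧
    MonotoneOn f (Set.Icc (0 : ℝ) 1) ∧ ConcaveOn ℝ (Set.Icc (0 : ℝ) 1) f

/-- `Dom(A) = sup {α : A i i ≥ α · A i j for all i ≠ j}`. -/
def DomA {k : ℕ} (A : Fin k → Fin k → ℝ) : ℝ :=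
  sSup {α : ℝ | ∀ i j, i ≠ j → α * A i j ≤ A i i}

/-- Tangent-line inequality for strictly concave functions. -/
lemma tangent_lt {f f' : ℝ → ℝ}
    (hstrict : StrictConcaveOn ℝ (Set.Icc (0 : ℝ) 1) f)
    (hderiv : ∀ t ∈ Set.Icc (0 : ℝ) 1, HasDerivWithinAt f (f' t) (Set.Icc (0 : ℝ) 1) t)
    {c t : ℝ} (hc : c ∈ Set.Icc (0 : ℝ) 1) (ht : t ∈ Set.Icc (0 : ℝ) 1) (hne : t ≠ c) :
    f t < f c + f' c * (t - c) := by
  rcases lt_or_gt_of_ne hne with h | h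
  · have := hstrict.lt_slope_of_hasDerivWithinAt ht hc h (hderiv c hc)
    rw [slope_def_field, lt_div_iff₀ (by linarith)] at this
    linarith
  · have := hstrict.slope_lt_of_hasDerivWithinAt hc ht h (hderiv c hc)
    rw [slope_def_field, div_lt_iff₀ (by linarith)] at this
    linarith

lemma deriv_one_le {f f' : ℝ → ℝ}
    (hstrict : StrictConcaveOn ℝ (Set.Icc (0 : ℝ) 1) f)
    (hderiv : ∀ t ∈ Set.Icc (0 : ℝ) 1, HasDerivWithinAt f (f' t) (Set.Icc (0 : ℝ) 1) t)
    {c : ℝ} (hc : c ∈ Set.Icc (0 : ℝ) 1) : f' 1 ≤ f' c := by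
  rcases eq_or_ne c 1 with rfl | h
  · exact le_rfl
  · have h1 : (1 : ℝ) ∈ Set.Icc (0 : ℝ) 1 := by simp
    have a := tangent_lt hstrict hderiv hc h1 h.symm
    have b := tangent_lt hstrict hderiv h1 hc h
    have : c < 1 := lt_of_le_of_ne hc.2 h
    nlinarith

lemma xlogx_tangent {c t : ℝ} (hc : 0 < c) (ht : 0 ≤ t) :
    c * Real.log c + (Real.log c + 1) * (t - c) ≤ t * Real.log t := by
  rcases ht.eq_or_lt with rfl | ht
  · simp; nlinarith
  · have := Real.log_le_sub_one_of_pos (div_pos hc ht)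
    rw [Real.log_div hc.ne' ht.ne'] at this
    have h2 : t * (Real.log c - Real.log t) ≤ t * (c / t - 1) :=
      mul_le_mul_of_nonneg_left this ht.le
    have h3 : t * (c / t - 1) = c - t := by field_simp
    nlinarith

/-- Bounds on `Dom(A)`. -/
lemma dom_facts {k : ℕ} {A : Fin k → Fin k → ℝ} (hA0 : ∀ i j, 0 ≤ A i j)
    (hdiag : ∀ i j, i ≠ j → A i j < A i i) (hD : DomA A ≠ 0) :
    1 ≤ DomA A ∧ ∀ i j, i ≠ j → DomA A * A i j ≤ A i i := by
  have hb : BddAbove {α : ℝ | ∀ i j, i ≠ j → α * A i j ≤ A i i} := by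
    by_contra h
    exact hD (Real.sSup_of_not_bddAbove h)
  have h1 : (1 : ℝ) ∈ {α : ℝ | ∀ i j, i ≠ j → α * A i j ≤ A i i} := by
    intro i j hij; rw [one_mul]; exact (hdiag i j hij).le
  refine ⟨le_csSup hb h1, fun i j hij => ?_⟩
  rcases (hA0 i j).eq_or_lt with h | h
  · rw [← h, mul_zero]; exact hA0 i i
  · rw [← le_div_iff₀ h]
    refine csSup_le ⟨1, h1⟩ fun α hα => ?_
    rw [le_div_iff₀ h]; exact hα i j hij

/-- The block-uniform assignment dominates any assignment supported on the blocks
for convex separable costs. -/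
lemma sum_tangent {nr : ℕ} {φ : ℝ → ℝ} {u y : Fin nr → ℝ} {m : ℝ}
    (h : ∀ r, φ (u r) + m * (y r - u r) ≤ φ (y r)) (hs : ∑ r, y r = ∑ r, u r) :
    ∑ r, φ (u r) ≤ ∑ r, φ (y r) := by
  have := Finset.sum_le_sum fun r (_ : r ∈ Finset.univ) => h r
  rw [Finset.sum_add_distrib, ← Finset.mul_sum, Finset.sum_sub_distrib, hs] at this
  linarith

/-- A separable tangent bound with equality of totals forces pointwise equality. -/
lemma eq_of_tangent {np nr : ℕ} {F G x u : Fin np → Fin nr → ℝ} {M : Fin np → ℝ}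
    (hlt : ∀ p r, x p r ≠ u p r → F p r < G p r + M p * (x p r - u p r))
    (heq : ∀ p r, x p r = u p r → F p r = G p r)
    (hs : ∀ p, ∑ r, x p r = ∑ r, u p r)
    (hFG : ∑ p, ∑ r, G p r ≤ ∑ p, ∑ r, F p r) : x = u := by
  by_contra hne
  have : ∃ p r, x p r ≠ u p r := by
    by_contra h
    push Not at h
    exact hne (funext fun p => funext fun r => h p r)
  obtain ⟨p0, r0, h0⟩ := this
  have hle : ∀ p r, F p r ≤ G p r + M p * (x p r - u p r) := by
    intro p r
    by_cases h : x p r = u p r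
    · rw [heq p r h, h]; simp
    · exact (hlt p r h).le
  have hsum : ∀ p, ∑ r, (G p r + M p * (x p r - u p r)) = ∑ r, G p r := by
    intro p
    rw [Finset.sum_add_distrib, ← Finset.mul_sum, Finset.sum_sub_distrib, hs p]
    ring
  have : ∑ p, ∑ r, F p r < ∑ p, ∑ r, G p r := by
    refine Finset.sum_lt_sum (fun p _ => ?_) ⟨p0, Finset.mem_univ _, ?_⟩
    · rw [← hsum p]; exact Finset.sum_le_sum fun r _ => hle p r
    · rw [← hsum p0]
      exact Finset.sum_lt_sum (fun r _ => hle p0 r) ⟨r0, Finset.mem_univ _, hlt p0 r0 h0⟩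
  linarith

/-- on blockwise dominant similarity matrices, every solution of PM
(with a strictly concave perturbation function satisfying `f′(0) < Dom(A)·f′(1)`)
weakly dominates every solution of PLRA on quality and all randomness metrics. -/
theorem stmt0 (np nr k lp lr : ℕ) (Q : ℝ) (hQ : Q ∈ Set.Icc (0 : ℝ) 1)
    (S : Fin np → Fin nr → ℝ) (A : Fin k → Fin k → ℝ)
    (pg : Fin np → Fin k) (rg : Fin nr → Fin k)
    (hA0 : ∀ i j, 0 ≤ A i j)
    (hSA : ∀ p r, S p r = A (pg p) (rg r))
    (hdiag : ∀ i j, i ≠ j → A i j < A i i)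
    (hne : ¬ ∀ i j : Fin k,
      {r : Fin nr | rg r = i}.ncard = {r : Fin nr | rg r = j}.ncard)
    (hload : ∀ i : Fin k,
      {p : Fin np | pg p = i}.ncard * lp ≤ {r : Fin nr | rg r = i}.ncard * lr)
    (hQr : ∀ i : Fin k, (lp : ℝ) ≤ Q * {r : Fin nr | rg r = i}.ncard)
    (f f' : ℝ → ℝ) (hf : IsPerturbation f)
    (hstrict : StrictConcaveOn ℝ (Set.Icc (0 : ℝ) 1) f)
    (hderiv : ∀ t ∈ Set.Icc (0 : ℝ) 1, HasDerivWithinAt f (f' t) (Set.Icc (0 : ℝ) 1) t)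
    (hf' : f' 0 < DomA A * f' 1) :
    ∀ x ∈ PM np nr lp lr Q f S, ∀ y ∈ PLRA np nr lp lr Q S,
      Quality S y ≤ Quality S x ∧
      Maxprob x ≤ Maxprob y ∧
      AvgMaxp x ≤ AvgMaxp y ∧
      L2Norm x ≤ L2Norm y ∧
      Entropy y ≤ Entropy x ∧
      SupportSize y ≤ SupportSize x := by
  intro x hx y hy
  -- the case of zero paper load
  rcases Nat.eq_zero_or_pos lp with hlp | hlp
  · have hz : ∀ z, Feasible np nr lp lr Q z → z = fun _ _ => 0 := by
      intro z hz
      funext p r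
      have := hz.1 p
      rw [hlp, Nat.cast_zero, Finset.sum_eq_zero_iff_of_nonneg (fun r _ => (hz.2.2 p r).1)] at this
      exact this r (Finset.mem_univ _)
    have hxy : x = y := (hz x hx.1).trans (hz y hy.1).symm
    subst hxy
    exact ⟨le_rfl, le_rfl, le_rfl, le_rfl, le_rfl, le_rfl⟩
  have hlpR : (0 : ℝ) < lp := by exact_mod_cast hlp
  set n : Fin k → ℕ := fun i => {r : Fin nr | rg r = i}.ncard with hn
  have hnQ : ∀ i, (lp : ℝ) ≤ Q * n i := hQr
  have hnpos : ∀ i, (0 : ℝ) < n i := by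
    intro i
    rcases Nat.eq_zero_or_pos (n i) with h | h
    · have := hnQ i
      rw [h] at this; simp at this; omega
    · exact_mod_cast h
  have hncard : ∀ i, n i = (Finset.univ.filter fun r => rg r = i).card := by
    intro i
    simp only [hn, Set.ncard_eq_toFinset_card', Set.toFinset_setOf]
  -- the block-uniform assignment
  set c : Fin k → ℝ := fun i => lp / n i with hc
  have hcpos : ∀ i, 0 < c i := fun i => div_pos hlpR (hnpos i)
  have hcQ : ∀ i, c i ≤ Q := fun i => (div_le_iff₀ (hnpos i)).2 (hnQ i)
  have hcI : ∀ i, c i ∈ Set.Icc (0 : ℝ) 1 := fun i => ⟨(hcpos i).le, (hcQ i).trans hQ.2⟩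
  set u : Fin np → Fin nr → ℝ := fun p r => if rg r = pg p then c (pg p) else 0 with hu
  have husum : ∀ p, ∑ r, u p r = lp := by
    intro p
    simp only [hu]
    rw [← Finset.sum_filter, Finset.sum_const, ← hncard, nsmul_eq_mul, hc]
    have := (hnpos (pg p)).ne'
    field_simp
  have huF : Feasible np nr lp lr Q u := by
    refine ⟨husum, fun r => ?_, fun p r => ?_⟩
    · have h1 : ∑ p, u p r = ∑ p, if pg p = rg r then c (rg r) else 0 := by
        refine Finset.sum_congr rfl fun p _ => ?_
        simp only [hu]
        by_cases h : rg r = pg p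
        · simp [h]
        · rw [if_neg h, if_neg (fun h' => h h'.symm)]
      rw [h1, ← Finset.sum_filter, Finset.sum_const, nsmul_eq_mul]
      have h2 := hload (rg r)
      have h3 : {p : Fin np | pg p = rg r}.ncard
          = (Finset.univ.filter fun p => pg p = rg r).card := by
        simp only [Set.ncard_eq_toFinset_card', Set.toFinset_setOf]
      rw [h3] at h2
      have h4 : (((Finset.univ.filter fun p => pg p = rg r).card : ℝ)) * lp
          ≤ (n (rg r) : ℝ) * lr := by exact_mod_cast h2
      rw [hc, ← mul_div_assoc, div_le_iff₀ (hnpos _)]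
      linarith
    · simp only [hu]
      split_ifs
      · exact ⟨(hcpos _).le, hcQ _⟩
      · exact ⟨le_rfl, hQ.1⟩
  -- positivity facts
  have hApos : ∀ i, 0 < A i i := by
    intro i
    by_contra h
    refine hne fun a b => ?_
    have : ∀ j, j = i := by
      intro j
      by_contra hj
      exact h ((hA0 i j).trans_lt (hdiag i j (Ne.symm hj)))
    rw [this a, this b]
  have h0I : (0 : ℝ) ∈ Set.Icc (0 : ℝ) 1 := by simp
  have h1I : (1 : ℝ) ∈ Set.Icc (0 : ℝ) 1 := by simp
  have hf'0 : 0 < f' 0 := by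
    have h1 := tangent_lt hstrict hderiv h0I h1I one_ne_zero
    have h2 := (hf.2.1 1 h1I).1
    rw [hf.1] at h1
    linarith
  have hD0 : DomA A ≠ 0 := by
    intro h; rw [h] at hf'; linarith
  obtain ⟨hD1, hD⟩ := dom_facts hA0 hdiag hD0
  have hf'1 : 0 < f' 1 := by
    by_contra h
    push Not at h
    nlinarith
  -- the perturbed maximizer is the block-uniform assignment
  have hxu : x = u := by
    refine eq_of_tangent (F := fun p r => S p r * f (x p r)) (G := fun p r => S p r * f (u p r))
      (M := fun p => A (pg p) (pg p) * f' (c (pg p))) ?_ ?_ ?_ (hx.2 u huF)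
    · intro p r hne'
      have hxI : x p r ∈ Set.Icc (0 : ℝ) 1 :=
        ⟨(hx.1.2.2 p r).1, (hx.1.2.2 p r).2.trans hQ.2⟩
      simp only [hSA]
      by_cases h : rg r = pg p
      · have hup : u p r = c (pg p) := by simp [hu, h]
        rw [hup] at hne' ⊢
        have := tangent_lt hstrict hderiv (hcI (pg p)) hxI hne'
        have := mul_lt_mul_of_pos_left this (hApos (pg p))
        rw [h]
        linarith
      · have hup : u p r = 0 := by simp [hu, h]
        rw [hup] at hne' ⊢
        have hxpos : 0 < x p r := lt_of_le_of_ne hxI.1 (Ne.symm hne')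
        have h1 := deriv_one_le hstrict hderiv (hcI (pg p))
        have hP : 0 < A (pg p) (pg p) := hApos _
        have h5 : A (pg p) (pg p) * f' 1 * x p r
            ≤ A (pg p) (pg p) * f' (c (pg p)) * x p r := by gcongr
        rw [hf.1]
        simp only [mul_zero, sub_zero, zero_add]
        refine lt_of_lt_of_le ?_ h5
        rcases (hA0 (pg p) (rg r)).eq_or_lt with hz | hpos
        · rw [← hz, zero_mul]; positivity
        · have h2 := tangent_lt hstrict hderiv h0I hxI hne'
          rw [hf.1] at h2
          have h3 := hD (pg p) (rg r) (Ne.symm h)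
          calc A (pg p) (rg r) * f (x p r)
              < A (pg p) (rg r) * (f' 0 * x p r) := by
                apply mul_lt_mul_of_pos_left _ hpos; linarith
            _ ≤ A (pg p) (rg r) * (DomA A * f' 1 * x p r) := by gcongr
            _ = (DomA A * A (pg p) (rg r)) * f' 1 * x p r := by ring
            _ ≤ A (pg p) (pg p) * f' 1 * x p r := by gcongr
    · intro p r h; simp only [h]
    · intro p; rw [husum, hx.1.1 p]
  -- the quality maximizer is supported on the blocks
  have hy0 : ∀ p r, rg r ≠ pg p → y p r = 0 := by
    intro p0 r0 h0
    by_contra hne0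
    have hypos : 0 < y p0 r0 := lt_of_le_of_ne (hy.1.2.2 p0 r0).1 (Ne.symm hne0)
    have hle : ∀ p r, y p r * S p r ≤ y p r * A (pg p) (pg p) := by
      intro p r
      refine mul_le_mul_of_nonneg_left ?_ (hy.1.2.2 p r).1
      rw [hSA]
      by_cases h : pg p = rg r
      · rw [← h]
      · exact (hdiag _ _ h).le
    have h1 : Quality S y < ∑ p, ∑ r, y p r * A (pg p) (pg p) := by
      refine Finset.sum_lt_sum (fun p _ => Finset.sum_le_sum fun r _ => hle p r)
        ⟨p0, Finset.mem_univ _, Finset.sum_lt_sum (fun r _ => hle p0 r)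
          ⟨r0, Finset.mem_univ _, ?_⟩⟩
      refine mul_lt_mul_of_pos_left ?_ hypos
      rw [hSA]
      exact hdiag _ _ (Ne.symm h0)
    have h2 : Quality S u = ∑ p, ∑ r, y p r * A (pg p) (pg p) := by
      refine Finset.sum_congr rfl fun p _ => ?_
      rw [← Finset.sum_mul, hy.1.1 p, ← husum p, Finset.sum_mul]
      refine Finset.sum_congr rfl fun r _ => ?_
      rw [hSA]
      by_cases h : rg r = pg p
      · rw [h]
      · simp [hu, h]
    have := hy.2 u huF
    linarith
  have hsum : ∀ p, ∑ r, y p r = ∑ r, u p r := fun p => by rw [husum, hy.1.1 p]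
  have hrow : ∀ (φ m : ℝ → ℝ), (∀ d t, 0 < d → 0 ≤ t → φ d + m d * (t - d) ≤ φ t) →
      ∀ p, ∑ r, φ (u p r) ≤ ∑ r, φ (y p r) := by
    intro φ m h p
    refine sum_tangent (m := m (c (pg p))) (fun r => ?_) (hsum p)
    by_cases hr : rg r = pg p
    · have : u p r = c (pg p) := by simp [hu, hr]
      rw [this]
      exact h _ _ (hcpos _) (hy.1.2.2 p r).1
    · have : u p r = 0 := by simp [hu, hr]
      rw [this, hy0 p r hr]; simp
  have hmax : ∀ p, ⨆ r, u p r ≤ ⨆ r, y p r := by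
    intro p
    have hbd : BddAbove (Set.range (y p)) := (Set.finite_range _).bddAbove
    have hcle : c (pg p) ≤ ⨆ r, y p r := by
      have h1 : (lp : ℝ) ≤ n (pg p) * ⨆ r, y p r := by
        rw [← hy.1.1 p, hncard, ← nsmul_eq_mul, ← Finset.sum_const, Finset.sum_filter]
        refine Finset.sum_le_sum fun r _ => ?_
        by_cases hr : rg r = pg p
        · rw [if_pos hr]; exact le_ciSup hbd r
        · rw [if_neg hr, hy0 p r hr]
      rw [hc]
      rw [div_le_iff₀ (hnpos _)]
      linarith
    have hnon : Nonempty (Fin nr) := by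
      by_contra h
      rw [not_nonempty_iff] at h
      have := husum p
      rw [Finset.univ_eq_empty, Finset.sum_empty] at this
      linarith
    refine ciSup_le fun r => ?_
    simp only [hu]
    split_ifs
    · exact hcle
    · exact (hcpos _).le.trans hcle
  rw [hxu]
  refine ⟨?_, ?_, ?_, ?_, ?_, ?_⟩
  · refine Finset.sum_le_sum fun p _ => ?_
    have : ∀ z : Fin np → Fin nr → ℝ, (∀ r, rg r ≠ pg p → z p r = 0) →
        ∑ r, z p r * S p r = (∑ r, z p r) * A (pg p) (pg p) := by
      intro z hz
      rw [Finset.sum_mul]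
      refine Finset.sum_congr rfl fun r _ => ?_
      by_cases hr : rg r = pg p
      · rw [hSA, hr]
      · rw [hz r hr]; simp
    rw [this y (hy0 p), this u (fun r hr => by simp [hu, hr]), hsum p]
  · exact ciSup_mono (Set.finite_range _).bddAbove hmax
  · exact div_le_div_of_nonneg_right (Finset.sum_le_sum fun p _ => hmax p) (Nat.cast_nonneg _)
  · refine Real.sqrt_le_sqrt (Finset.sum_le_sum fun p _ => ?_)
    refine hrow (fun t => t ^ 2) (fun d => 2 * d) (fun d t _ _ => ?_) p
    nlinarith [sq_nonneg (t - d)]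
  · refine neg_le_neg (Finset.sum_le_sum fun p _ => ?_)
    exact hrow (fun t => t * Real.log t) (fun d => Real.log d + 1)
      (fun d t hd ht => xlogx_tangent hd ht) p
  · refine Set.ncard_le_ncard ?_ (Set.toFinite _)
    rintro ⟨p, r⟩ h
    simp only [Set.mem_setOf_eq] at h ⊢
    by_cases hr : rg r = pg p
    · simp only [hu, if_pos hr]; exact hcpos _
    · rw [hy0 p r hr] at h; exact absurd h (lt_irrefl _)
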